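/- arXiv:2210.15783 — 3 statements merged into one kernel-verified Lean document; each statement's English description precedes it below -/
import Mathlib

section
/- Let N ≥ 1, let λ : Fin N → ℂ with λ₁ := λ 0 real, and suppose Re(λ_m) < Re(λ₁) for every m ≠ 0. Let z, w : Fin N → ℂ and let s̄ be an N×N complex matrix, and define 𝒩(t) = Σ_{m,n} z_m w_n s̄_{mn} φ_{λ_m λ_n}(t). Then 𝒩(t) e^{−λ₁ t} − (z₁ w₁ s̄₁₁ t + g₀) tends to 0 as t → ∞, where g₀ = Σ_{n≠0} z₁ w_n s̄_{1n}/(λ₁ − λ_n) − Σ_{m≠0} z_m w₁ s̄_{m1}/(λ_m − λ₁) (indices written 1-based, so z₁ = z 0, s̄₁₁ = s̄ 0 0, etc.). -/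
/-!
Multiplying by `e^{-ct}` shifts both indices of `φ` by `-c`, so after rescaling the dominant
eigenvalue becomes `0` and all others lie in the open left half-plane. There `φ_{ab}(t) → 0`
(for `a = b` because exponential decay beats the factor `t`), while `φ_{0b}(t) = (e^{bt} - 1)/b`
tends to `-1/b` and `φ_{00}(t) = t`. Hence only the dominant row and column of the double sum
survive.
-/

open Filter Finset

/-- `φ_{λμ}(t)`. -/
noncomputable def phi (lam mu : ℂ) (t : ℝ) : ℂ :=
  if lam = mu then (t : ℂ) * Complex.exp (lam * t)
  else (Complex.exp (lam * t) - Complex.exp (mu * t)) / (lam - mu)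

theorem phi_self (a : ℂ) (t : ℝ) : phi a a t = t * Complex.exp (a * t) :=
  if_pos rfl

theorem phi_of_ne {a b : ℂ} (hab : a ≠ b) (t : ℝ) :
    phi a b t = (Complex.exp (a * t) - Complex.exp (b * t)) / (a - b) :=
  if_neg hab

theorem phi_comm (a b : ℂ) (t : ℝ) : phi a b t = phi b a t := by
  rcases eq_or_ne a b with rfl | hab
  · rfl
  · rw [phi_of_ne hab, phi_of_ne hab.symm, ← neg_div_neg_eq, neg_sub, neg_sub]

theorem phi_zero_zero (t : ℝ) : phi 0 0 t = t := by
  rw [phi_self, zero_mul, Complex.exp_zero, mul_one]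

theorem phi_mul_exp_neg (a b c : ℂ) (t : ℝ) :
    phi a b t * Complex.exp (-c * t) = phi (a - c) (b - c) t := by
  have exp_shift (x : ℂ) :
      Complex.exp (x * t) * Complex.exp (-c * t) = Complex.exp ((x - c) * t) := by
    rw [← Complex.exp_add, ← add_mul, sub_eq_add_neg]
  simp only [phi, sub_left_inj, sub_sub_sub_cancel_right]
  split_ifs
  · rw [mul_assoc, exp_shift]
  · rw [div_mul_eq_mul_div, sub_mul, exp_shift, exp_shift]

theorem phi_self_mul_exp_neg (a : ℂ) (t : ℝ) : phi a a t * Complex.exp (-a * t) = t := by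
  rw [phi_mul_exp_neg, sub_self, phi_zero_zero]

theorem tendsto_cexp_mul_ofReal_atTop_nhds_zero {a : ℂ} (ha : a.re < 0) :
    Tendsto (fun t : ℝ => Complex.exp (a * t)) atTop (nhds 0) := by
  rw [Complex.tendsto_exp_nhds_zero_iff]
  simpa only [Complex.re_mul_ofReal, id] using tendsto_id.const_mul_atTop_of_neg ha

theorem tendsto_ofReal_mul_cexp_mul_ofReal_atTop_nhds_zero {a : ℂ} (ha : a.re < 0) :
    Tendsto (fun t : ℝ => (t : ℂ) * Complex.exp (a * t)) atTop (nhds 0) := by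
  rw [tendsto_zero_iff_norm_tendsto_zero]
  have hdecay := tendsto_rpow_mul_exp_neg_mul_atTop_nhds_zero 1 (-a.re) (neg_pos.2 ha)
  refine hdecay.congr' ?_
  filter_upwards [eventually_ge_atTop 0] with t ht
  rw [norm_mul, Complex.norm_exp, Complex.re_mul_ofReal, Complex.norm_of_nonneg ht,
    Real.rpow_one, neg_neg]

theorem tendsto_phi_atTop_nhds_zero {a b : ℂ} (ha : a.re < 0) (hb : b.re < 0) :
    Tendsto (fun t => phi a b t) atTop (nhds 0) := by
  rcases eq_or_ne a b with rfl | hab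
  · simpa only [phi_self] using tendsto_ofReal_mul_cexp_mul_ofReal_atTop_nhds_zero ha
  · simpa only [phi_of_ne hab, sub_zero, zero_div] using
      ((tendsto_cexp_mul_ofReal_atTop_nhds_zero ha).sub
        (tendsto_cexp_mul_ofReal_atTop_nhds_zero hb)).div_const (a - b)

theorem tendsto_phi_zero_left {b : ℂ} (hb : b.re < 0) :
    Tendsto (fun t => phi 0 b t) atTop (nhds (1 / (0 - b))) := by
  have hb0 : (0 : ℂ) ≠ b := by
    rintro rfl
    exact hb.false
  simpa only [phi_of_ne hb0, zero_mul, Complex.exp_zero, sub_zero] using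
    ((tendsto_cexp_mul_ofReal_atTop_nhds_zero hb).const_sub 1).div_const (0 - b)

theorem tendsto_phi_mul_exp_neg_nhds_zero {a b c : ℂ} (ha : a.re < c.re) (hb : b.re < c.re) :
    Tendsto (fun t : ℝ => phi a b t * Complex.exp (-c * t)) atTop (nhds 0) := by
  simp only [phi_mul_exp_neg]
  exact tendsto_phi_atTop_nhds_zero (by simpa using ha) (by simpa using hb)

theorem tendsto_phi_mul_exp_neg_left {a b : ℂ} (hb : b.re < a.re) :
    Tendsto (fun t : ℝ => phi a b t * Complex.exp (-a * t)) atTop (nhds (1 / (a - b))) := by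
  simp only [phi_mul_exp_neg, sub_self]
  simpa only [zero_sub, neg_sub] using
    tendsto_phi_zero_left (b := b - a) (by simpa using hb)

theorem tendsto_phi_mul_exp_neg_right {a b : ℂ} (ha : a.re < b.re) :
    Tendsto (fun t : ℝ => phi a b t * Complex.exp (-b * t)) atTop (nhds (-(1 / (a - b)))) := by
  simpa only [phi_comm a b, ← one_div_neg_eq_neg_one_div, neg_sub] using
    tendsto_phi_mul_exp_neg_left ha

theorem sum_sum_eq_add_sum_erase {ι κ M : Type*} [DecidableEq ι] [DecidableEq κ]
    [AddCommMonoid M] {s : Finset ι} {t : Finset κ} {i : ι} {j : κ} (hi : i ∈ s) (hj : j ∈ t)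
    (f : ι → κ → M) :
    ∑ m ∈ s, ∑ n ∈ t, f m n =
      f i j + (∑ n ∈ t.erase j, f i n + ∑ m ∈ s.erase i, f m j +
        ∑ m ∈ s.erase i, ∑ n ∈ t.erase j, f m n) := by
  simp only [← add_sum_erase t _ hj, sum_add_distrib, ← add_sum_erase s _ hi]
  abel

theorem stmt3_general {ι : Type*} [Fintype ι] [DecidableEq ι] (lam : ι → ℂ) (c : ι → ι → ℂ)
    (o : ι) (hdom : ∀ m, m ≠ o → (lam m).re < (lam o).re) :
    Tendsto
      (fun t : ℝ =>
        (∑ m, ∑ n, c m n * phi (lam m) (lam n) t) * Complex.exp (-lam o * t) - c o o * t)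
      atTop
      (nhds ((∑ n ∈ univ.erase o, c o n / (lam o - lam n)) -
        ∑ m ∈ univ.erase o, c m o / (lam m - lam o))) := by
  have hlt {m : ι} (hm : m ∈ univ.erase o) : (lam m).re < (lam o).re :=
    hdom m (ne_of_mem_erase hm)
  let F (m n : ι) (t : ℝ) : ℂ := c m n * (phi (lam m) (lam n) t * Complex.exp (-lam o * t))
  have hrow : Tendsto (fun t => ∑ n ∈ univ.erase o, F o n t) atTop
      (nhds (∑ n ∈ univ.erase o, c o n * (1 / (lam o - lam n)))) :=
    tendsto_finsetSum _ fun n hn => (tendsto_phi_mul_exp_neg_left (hlt hn)).const_mul _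
  have hcol : Tendsto (fun t => ∑ m ∈ univ.erase o, F m o t) atTop
      (nhds (∑ m ∈ univ.erase o, c m o * -(1 / (lam m - lam o)))) :=
    tendsto_finsetSum _ fun m hm => (tendsto_phi_mul_exp_neg_right (hlt hm)).const_mul _
  have hrest : Tendsto (fun t => ∑ m ∈ univ.erase o, ∑ n ∈ univ.erase o, F m n t) atTop
      (nhds (∑ m ∈ univ.erase o, ∑ n ∈ univ.erase o, c m n * 0)) :=
    tendsto_finsetSum _ fun m hm => tendsto_finsetSum _ fun n hn =>
      (tendsto_phi_mul_exp_neg_nhds_zero (hlt hm) (hlt hn)).const_mul _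
  have hsplit (t : ℝ) :
      (∑ m, ∑ n, c m n * phi (lam m) (lam n) t) * Complex.exp (-lam o * t) - c o o * t =
        ∑ n ∈ univ.erase o, F o n t + ∑ m ∈ univ.erase o, F m o t +
          ∑ m ∈ univ.erase o, ∑ n ∈ univ.erase o, F m n t := by
    simp only [sum_mul, mul_assoc]
    rw [sum_sum_eq_add_sum_erase (mem_univ o) (mem_univ o), phi_self_mul_exp_neg,
      add_sub_cancel_left]
  simp only [hsplit]
  simpa only [mul_zero, sum_const_zero, add_zero, mul_neg, sum_neg_distrib, mul_one_div,
    ← sub_eq_add_neg] using (hrow.add hcol).add hrest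

/-- Asymptotics of the rescaled numerator `𝒩(t) e^{-λ₁ t}` of the log-sensitivity:
it approaches `z₁ w₁ s̄₁₁ t + g₀` as `t → ∞`. -/
theorem stmt3 {N : ℕ} (hN : 1 ≤ N) (lam : Fin N → ℂ)
    (z w : Fin N → ℂ) (sbar : Matrix (Fin N) (Fin N) ℂ)
    (hreal : (lam ⟨0, hN⟩).im = 0)
    (hdom : ∀ m : Fin N, m ≠ ⟨0, hN⟩ → (lam m).re < (lam ⟨0, hN⟩).re) :
    Filter.Tendsto
      (fun t : ℝ =>
        (∑ m : Fin N, ∑ n : Fin N, z m * w n * sbar m n * phi (lam m) (lam n) t)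
            * Complex.exp (-(lam ⟨0, hN⟩) * t)
          - (z ⟨0, hN⟩ * w ⟨0, hN⟩ * sbar ⟨0, hN⟩ ⟨0, hN⟩ * (t : ℂ)
              + ((∑ n ∈ Finset.univ.erase ⟨0, hN⟩,
                    z ⟨0, hN⟩ * w n * sbar ⟨0, hN⟩ n / (lam ⟨0, hN⟩ - lam n))
                - (∑ m ∈ Finset.univ.erase ⟨0, hN⟩,
                    z m * w ⟨0, hN⟩ * sbar m ⟨0, hN⟩ / (lam m - lam ⟨0, hN⟩)))))
      Filter.atTop (nhds 0) := by
  simpa only [sub_sub] using tendsto_sub_nhds_zero_iff.2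
    (stmt3_general lam (fun m n => z m * w n * sbar m n) ⟨0, hN⟩ hdom)
end

section
/- Consider the two-spin chain engineered for perfect state transfer with λ = π/5, for which the transfer error is e(t) = (1/2)(1 + cos(πt/5)) and the sensitivity of the error to a perturbation of the coupling is d(t) = t·sin(πt/5). Then for every natural number n, at the perfect-transfer times t_n = 5(2n+1): (i) e(t_n) = 0; (ii) d(t_n) = 0 (the sensitivity vanishes); and (iii) the magnitude of the log-sensitivity diverges: |d(t)·(π/10)/e(t)| → +∞ as t → t_n with t ≠ t_n (limit along the punctured neighborhood filter 𝓝[≠] t_n is atTop). -/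
open Real Filter Topology

/-!
In terms of the phase `x = λt` the log-sensitivity is `x * (sin x / (1 + cos x)) = x * tan (x / 2)`.
Perfect transfer happens exactly when `cos x = -1`, that is, at the poles of `tan (x / 2)`, and
none of these poles is cancelled by the factor `x`.
-/

theorem one_add_cos (x : ℝ) : 1 + cos x = 2 * cos (x / 2) ^ 2 := by
  have hdouble := cos_two_mul (x / 2)
  rw [mul_div_cancel₀ x two_ne_zero] at hdouble
  linear_combination hdouble

-- Where `cos x = -1`, both sides are quotients by zero, hence zero.
theorem sin_div_one_add_cos (x : ℝ) : sin x / (1 + cos x) = tan (x / 2) := by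
  have hsin : sin x = 2 * sin (x / 2) * cos (x / 2) := by
    rw [← sin_two_mul, mul_div_cancel₀ x two_ne_zero]
  rw [hsin, one_add_cos, tan_eq_sin_div_cos]
  rcases eq_or_ne (cos (x / 2)) 0 with h | h
  · simp [h]
  · field_simp

theorem cos_half_eq_zero_of_cos_eq_neg_one {x : ℝ} (hx : cos x = -1) : cos (x / 2) = 0 := by
  simpa [hx] using one_add_cos x

theorem ne_zero_of_cos_eq_neg_one {x : ℝ} (hx : cos x = -1) : x ≠ 0 := by
  rintro rfl
  norm_num at hx

theorem tendsto_const_mul_nhdsNE {G₀ : Type*} [TopologicalSpace G₀] [GroupWithZero G₀]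
    [SeparatelyContinuousMul G₀] {a : G₀} (ha : a ≠ 0) (x : G₀) :
    Tendsto (a * ·) (𝓝[≠] x) (𝓝[≠] (a * x)) :=
  ((Homeomorph.mulLeft₀ a ha).map_punctured_nhds_eq x).le

theorem tendsto_abs_tan_half_of_cos_eq_neg_one {x : ℝ} (hx : cos x = -1) :
    Tendsto (fun y ↦ |tan (y / 2)|) (𝓝[≠] x) atTop := by
  have hhalf : Tendsto (· / 2) (𝓝[≠] x) (𝓝[≠] (x / 2)) := by
    simpa only [div_eq_inv_mul] using tendsto_const_mul_nhdsNE (inv_ne_zero two_ne_zero) x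
  exact (tendsto_abs_tan_of_cos_eq_zero (cos_half_eq_zero_of_cos_eq_neg_one hx)).comp hhalf

theorem tendsto_abs_mul_tan_half_of_cos_eq_neg_one {x : ℝ} (hx : cos x = -1) :
    Tendsto (fun y ↦ |y * tan (y / 2)|) (𝓝[≠] x) atTop := by
  have habs : Tendsto (fun y : ℝ ↦ |y|) (𝓝[≠] x) (𝓝 |x|) :=
    continuous_abs.continuousAt.tendsto.mono_left nhdsWithin_le_nhds
  simpa only [abs_mul] using habs.pos_mul_atTop (abs_pos.mpr (ne_zero_of_cos_eq_neg_one hx))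
    (tendsto_abs_tan_half_of_cos_eq_neg_one hx)

-- `l` is the `λ` of the paper: `l / 2 = J₁` is the coupling `ξ`, and `t * sin (l * t)` is, up to
-- sign, the `ξ`-derivative of the error `(1 + cos (2ξt)) / 2`.
theorem stmt15_general {l : ℝ} (hl : l ≠ 0) (k : ℤ) :
    (1 / 2 * (1 + cos (l * ((2 * k + 1) * π / l))) = 0) ∧
    ((2 * k + 1) * π / l * sin (l * ((2 * k + 1) * π / l)) = 0) ∧
    Tendsto (fun t ↦ |t * sin (l * t) * (l / 2) / (1 / 2 * (1 + cos (l * t)))|)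
      (𝓝[≠] ((2 * k + 1) * π / l)) atTop := by
  set τ : ℝ := (2 * k + 1) * π / l with hτ
  have hphase : l * τ = k * (2 * π) + π := by rw [hτ]; field_simp
  have hcos : cos (l * τ) = -1 := by rw [hphase, cos_int_mul_two_pi_add_pi]
  have hsin : sin (l * τ) = 0 := sin_eq_zero_iff_cos_eq.mpr (Or.inr hcos)
  have hlogSensitivity (t : ℝ) :
      t * sin (l * t) * (l / 2) / (1 / 2 * (1 + cos (l * t))) = l * t * tan (l * t / 2) := by
    rw [← sin_div_one_add_cos]
    field_simp
  refine ⟨by rw [hcos]; norm_num, by rw [hsin, mul_zero], ?_⟩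
  simp only [hlogSensitivity]
  exact (tendsto_abs_mul_tan_half_of_cos_eq_neg_one hcos).comp (tendsto_const_mul_nhdsNE hl τ)

/-- Two-spin perfect state transfer: at the transfer times `t_n = 5(2n+1)` the error
`e(t) = (1/2)(1 + cos(πt/5))` and sensitivity `d(t) = t sin(πt/5)` both vanish, while the
magnitude of the log-sensitivity `|d(t)·(π/10)/e(t)|` diverges as `t → t_n`. -/
theorem stmt15 (n : ℕ) :
    ((1/2 : ℝ) * (1 + Real.cos (π * (5*(2*n+1) : ℝ) / 5)) = 0) ∧
    ((5*(2*n+1) : ℝ) * Real.sin (π * (5*(2*n+1) : ℝ) / 5) = 0) ∧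
    Filter.Tendsto
      (fun t : ℝ => |t * Real.sin (π * t / 5) * (π/10) / ((1/2) * (1 + Real.cos (π * t / 5)))|)
      (𝓝[≠] (5*(2*n+1) : ℝ)) Filter.atTop := by
  have hτ : (2 * ((n : ℤ) : ℝ) + 1) * π / (π / 5) = 5 * (2 * n + 1) := by push_cast; field_simp
  have hξ : π / 5 / 2 = π / 10 := by ring
  simpa only [hτ, hξ, div_mul_eq_mul_div] using stmt15_general (l := π / 5) (by positivity) n
end

section
/- Consider the three-spin chain engineered for perfect state transfer with λ = π/5, for which the transfer error is e(t) = 5/8 + (1/2)cos(πt/5) − (1/8)cos(2πt/5) and the sensitivity of the error to a perturbation of the 2–3 coupling is d(t) = −(√2/4)·t·sin(πt/5) + (√2/8)·t·sin(2πt/5). Then for every natural number n, at the perfect-transfer times t_n = 5(2n+1): (i) e(t_n) = 0; (ii) d(t_n) = 0 (the sensitivity vanishes); and (iii) the magnitude of the log-sensitivity diverges: |d(t)·(√2·π/10)/e(t)| → +∞ as t → t_n with t ≠ t_n (limit along the punctured neighborhood filter 𝓝[≠] t_n is atTop). -/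
open Real Filter Topology

/-!
The error depends on the 2–3 coupling `ξ` and on `t` through the phase `Ω t` and a prefactor that is
stationary at the nominal coupling, so `ξ₀ ∂e/∂ξ = (t / 2) ∂e/∂t`: perturbing the coupling amounts
to rescaling time. Perfect transfer is a minimum of the nonnegative error, hence the sensitivity
vanishes there, while the log-sensitivity is `t / 2` times the logarithmic derivative of an analytic
function, which has a simple pole at every zero of that function.
-/

theorem tendsto_mul_logDeriv_cobounded {𝕜 : Type*} [NontriviallyNormedField 𝕜] [CompleteSpace 𝕜]
    [CharZero 𝕜] {f g : 𝕜 → 𝕜} {x : 𝕜} (hf : AnalyticAt 𝕜 f x) (hfx : f x = 0)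
    (hf_ne : ∃ᶠ z in 𝓝 x, f z ≠ 0) (hg : AnalyticAt 𝕜 g x) (hgx : g x ≠ 0) :
    Tendsto (g * logDeriv f) (𝓝[≠] x) (Bornology.cobounded 𝕜) := by
  have order_ne_zero : meromorphicOrderAt f x ≠ 0 := by
    simpa [hf.meromorphicOrderAt_eq, hf.analyticOrderAt_eq_zero] using hfx
  have order_ne_top : meromorphicOrderAt f x ≠ ⊤ := by
    simpa [hf.meromorphicOrderAt_eq, analyticOrderAt_eq_top] using hf_ne
  apply tendsto_cobounded_of_meromorphicOrderAt_neg
  rw [meromorphicOrderAt_mul_of_ne_zero hg hgx,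
    meromorphicOrderAt_logDeriv_eq_neg_one hf.meromorphicAt order_ne_zero order_ne_top]
  decide

/-- Error `e(t)` of the transfer from spin 1 to spin 3 in the chain with couplings
`J₁ = J₂ = √2 ω / 2`, engineered for perfect state transfer; `ω` is the parameter `λ` of the
paper. -/
noncomputable def transferError (ω t : ℝ) : ℝ :=
  5 / 8 + 1 / 2 * cos (ω * t) - 1 / 8 * cos (2 * (ω * t))

/-- Sensitivity `∂e/∂ξ` of the transfer error to the 2–3 coupling `ξ`, at its nominal value
`ξ₀ = √2 ω / 2`. It is given by its closed form, since `transferError` has `ξ` already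
set to `ξ₀`. -/
noncomputable def couplingSensitivity (ω t : ℝ) : ℝ :=
  -(√2 / 4) * t * sin (ω * t) + √2 / 8 * t * sin (2 * (ω * t))

/-- Log-sensitivity `s(ξ₀, t) = (∂e/∂ξ) ξ₀ / e(t)` of the transfer error, with `ξ₀ = √2 ω / 2`.
It has the junk value `0` at times of perfect transfer. -/
noncomputable def logSensitivity (ω t : ℝ) : ℝ :=
  couplingSensitivity ω t * (√2 * ω / 2) / transferError ω t

section

variable (ω t : ℝ)

theorem transferError_eq_mul :
    transferError ω t = (1 + cos (ω * t)) * (3 - cos (ω * t)) / 4 := by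
  rw [transferError, cos_two_mul]
  ring

theorem transferError_nonneg : 0 ≤ transferError ω t := by
  have h_neg_one_le := neg_one_le_cos (ω * t)
  have h_le_one := cos_le_one (ω * t)
  rw [transferError_eq_mul]
  exact div_nonneg (mul_nonneg (by linarith) (by linarith)) (by norm_num)

theorem transferError_zero_right : transferError ω 0 = 1 := by
  norm_num [transferError]

theorem analyticOnNhd_transferError : AnalyticOnNhd ℝ (transferError ω) Set.univ := by
  intro t _
  unfold transferError
  fun_prop

theorem frequently_transferError_ne_zero : ∃ᶠ s in 𝓝 t, transferError ω s ≠ 0 := by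
  intro h_zero
  have h_eq_zero : transferError ω = 0 :=
    (analyticOnNhd_transferError ω).eq_of_eventuallyEq analyticOnNhd_const
      (h_zero.mono fun _ ↦ not_not.mp)
  simpa [transferError_zero_right] using congrFun h_eq_zero 0

theorem hasDerivAt_transferError :
    HasDerivAt (transferError ω) (-(ω / 2) * sin (ω * t) + ω / 4 * sin (2 * (ω * t))) t := by
  have h_phase : HasDerivAt (fun s ↦ ω * s) ω t := hasDerivAt_const_mul ω
  exact (((h_phase.cos.const_mul (1 / 2)).const_add (5 / 8)).sub
    ((h_phase.const_mul 2).cos.const_mul (1 / 8))).congr_deriv (by ring)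

theorem couplingSensitivity_mul_coupling :
    couplingSensitivity ω t * (√2 * ω / 2) = t / 2 * deriv (transferError ω) t := by
  have h_sqrt : √2 * √2 = 2 := mul_self_sqrt zero_le_two
  rw [(hasDerivAt_transferError ω t).deriv, couplingSensitivity]
  linear_combination (-(1 / 8) * sin (ω * t) + 1 / 16 * sin (2 * (ω * t))) * t * ω * h_sqrt

theorem logSensitivity_eq_mul_logDeriv :
    logSensitivity ω t = t / 2 * logDeriv (transferError ω) t := by
  rw [logSensitivity, couplingSensitivity_mul_coupling, logDeriv_apply, mul_div_assoc]

variable {ω t}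

theorem transferError_eq_zero_iff : transferError ω t = 0 ↔ cos (ω * t) = -1 := by
  have h_ne : 3 - cos (ω * t) ≠ 0 := by linarith [cos_le_one (ω * t)]
  simp [transferError_eq_mul, h_ne, add_eq_zero_iff_eq_neg']

theorem mul_ne_zero_of_transferError_eq_zero (h : transferError ω t = 0) : ω * t ≠ 0 := by
  intro h_phase
  norm_num [transferError, h_phase] at h

theorem deriv_transferError_eq_zero (h : transferError ω t = 0) :
    deriv (transferError ω) t = 0 :=
  IsLocalMin.deriv_eq_zero (.of_forall fun s ↦ h.trans_le (transferError_nonneg ω s))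

theorem couplingSensitivity_eq_zero (h : transferError ω t = 0) : couplingSensitivity ω t = 0 := by
  have hω : ω ≠ 0 := left_ne_zero_of_mul (mul_ne_zero_of_transferError_eq_zero h)
  have h_mul : couplingSensitivity ω t * (√2 * ω / 2) = 0 := by
    rw [couplingSensitivity_mul_coupling, deriv_transferError_eq_zero h, mul_zero]
  exact (mul_eq_zero.mp h_mul).resolve_right (by positivity)

theorem tendsto_abs_logSensitivity_atTop (h : transferError ω t = 0) :
    Tendsto (fun s ↦ |logSensitivity ω s|) (𝓝[≠] t) atTop := by
  have ht : t ≠ 0 := right_ne_zero_of_mul (mul_ne_zero_of_transferError_eq_zero h)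
  have h_cobounded : Tendsto ((· / 2) * logDeriv (transferError ω)) (𝓝[≠] t)
      (Bornology.cobounded ℝ) :=
    tendsto_mul_logDeriv_cobounded (analyticOnNhd_transferError ω t trivial) h
      (frequently_transferError_ne_zero ω t) (by fun_prop) (div_ne_zero ht two_ne_zero)
  simp only [logSensitivity_eq_mul_logDeriv]
  exact tendsto_norm_cobounded_atTop.comp h_cobounded

theorem stmt16_general (h : cos (ω * t) = -1) :
    transferError ω t = 0 ∧ couplingSensitivity ω t = 0 ∧
      Tendsto (fun s ↦ |logSensitivity ω s|) (𝓝[≠] t) atTop :=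
  have h_zero := transferError_eq_zero_iff.mpr h
  ⟨h_zero, couplingSensitivity_eq_zero h_zero, tendsto_abs_logSensitivity_atTop h_zero⟩

end

theorem cos_pi_div_five_mul_odd (n : ℕ) : cos (π / 5 * (5 * (2 * n + 1))) = -1 := by
  rw [show π / 5 * (5 * (2 * n + 1)) = n * (2 * π) + π by ring, cos_nat_mul_two_pi_add_pi]

theorem transferError_pi_div_five (t : ℝ) :
    transferError (π / 5) t = 5 / 8 + 1 / 2 * cos (π * t / 5) - 1 / 8 * cos (2 * π * t / 5) := by
  rw [transferError]
  ring_nf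

theorem couplingSensitivity_pi_div_five (t : ℝ) :
    couplingSensitivity (π / 5) t =
      -(√2 / 4) * t * sin (π * t / 5) + √2 / 8 * t * sin (2 * π * t / 5) := by
  rw [couplingSensitivity]
  ring_nf

theorem logSensitivity_pi_div_five (t : ℝ) :
    logSensitivity (π / 5) t =
      (-(√2 / 4) * t * sin (π * t / 5) + √2 / 8 * t * sin (2 * π * t / 5)) * (√2 * π / 10) /
        (5 / 8 + 1 / 2 * cos (π * t / 5) - 1 / 8 * cos (2 * π * t / 5)) := by
  rw [logSensitivity, couplingSensitivity_pi_div_five, transferError_pi_div_five]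
  ring_nf

/-- Three-spin perfect state transfer: at the transfer times `t_n = 5(2n+1)` the error
`e(t) = 5/8 + (1/2)cos(πt/5) - (1/8)cos(2πt/5)` and the sensitivity
`d(t) = -(√2/4) t sin(πt/5) + (√2/8) t sin(2πt/5)` both vanish, while the magnitude of the
log-sensitivity `|d(t)·(√2·π/10)/e(t)|` diverges as `t → t_n`. -/
theorem stmt16 (n : ℕ) :
    ((5/8 : ℝ) + (1/2) * Real.cos (π * (5*(2*n+1) : ℝ) / 5)
        - (1/8) * Real.cos (2 * π * (5*(2*n+1) : ℝ) / 5) = 0) ∧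
    (-(Real.sqrt 2 / 4) * (5*(2*n+1) : ℝ) * Real.sin (π * (5*(2*n+1) : ℝ) / 5)
        + (Real.sqrt 2 / 8) * (5*(2*n+1) : ℝ) * Real.sin (2 * π * (5*(2*n+1) : ℝ) / 5) = 0) ∧
    Filter.Tendsto
      (fun t : ℝ =>
        |(-(Real.sqrt 2 / 4) * t * Real.sin (π * t / 5)
            + (Real.sqrt 2 / 8) * t * Real.sin (2 * π * t / 5)) * (Real.sqrt 2 * π / 10)
          / ((5/8) + (1/2) * Real.cos (π * t / 5) - (1/8) * Real.cos (2 * π * t / 5))|)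
      (𝓝[≠] (5*(2*n+1) : ℝ)) Filter.atTop := by
  simpa only [transferError_pi_div_five, couplingSensitivity_pi_div_five,
    logSensitivity_pi_div_five] using stmt16_general (cos_pi_div_five_mul_odd n)
end
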